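/- Suppose H = (V,E) is a hypertree such that for each edge e ∈ E there exists a family of subsets (S(π))_{π ∈ S_e} with the set of nonconstant colorings of e equal to the disjoint union over π ∈ S_e of A(π, S(π)). Then X_H is F-positive. -/

import Mathlib

/-- A path in the hypergraph with edge set `E`: a sequence
`v₀, e₀, v₁, e₁, …, e_{m-1}, v_m` with distinct edges `eᵢ ∈ E`, distinct vertices
(except that the first and last vertex may coincide), and `vᵢ, vᵢ₊₁ ∈ eᵢ`. -/
structure HPath {V : Type} (E : Set (Set V)) where
  m : ℕ
  vert : Fin (m + 1) → V
  edge : Fin m → Set V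
  edge_mem : ∀ i, edge i ∈ E
  edge_inj : Function.Injective edge
  vert_almost_inj : ∀ i j : Fin (m + 1), vert i = vert j →
    i = j ∨ (i = 0 ∧ j = Fin.last m) ∨ (j = 0 ∧ i = Fin.last m)
  mem_left : ∀ i : Fin m, vert i.castSucc ∈ edge i
  mem_right : ∀ i : Fin m, vert i.succ ∈ edge i

/-- The first vertex of a path. -/
def HPath.first {V : Type} {E : Set (Set V)} (p : HPath E) : V := p.vert 0

/-- The last vertex of a path. -/
def HPath.last {V : Type} {E : Set (Set V)} (p : HPath E) : V := p.vert (Fin.last p.m)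

/-- A cycle is a path with `v₀ = v_m` and more than one edge. -/
def HPath.IsCycle {V : Type} {E : Set (Set V)} (p : HPath E) : Prop :=
  p.first = p.last ∧ 1 < p.m

/-- The hypergraph with edge set `E` is connected on the vertex set `W`. -/
def ConnectedOn {V : Type} (W : Set V) (E : Set (Set V)) : Prop :=
  ∀ v ∈ W, ∀ v' ∈ W, ∃ p : HPath E, p.first = v ∧ p.last = v'

/-- `(W, E)` is a hypertree: every edge is a subset of `W` of size at least 2,
the hypergraph is connected on `W`, and it has no cycles. -/
def IsHypertreeOn {V : Type} (W : Set V) (E : Set (Set V)) : Prop :=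
  (∀ e ∈ E, e ⊆ W ∧ 2 ≤ e.ncard) ∧ ConnectedOn W E ∧ ∀ p : HPath E, ¬ p.IsCycle

open Classical in
/-- The power sum symmetric function `p_i = x₁^i + x₂^i + ⋯` (variables indexed by `ℕ`),
as a multivariate power series: the coefficient of a monomial `d` is 1 iff `d = x_j^i`. -/
noncomputable def powerSum (i : ℕ) : MvPowerSeries ℕ ℚ :=
  fun d => if ∃ j, d = Finsupp.single j i then 1 else 0

/-- The fundamental quasisymmetric function `F_S` of degree `n` (0-indexed descent
positions `S ⊆ {0, …, n-2}`): the coefficient of a monomial `d` is the number of weakly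
increasing sequences `g : Fin n → ℕ`, strictly increasing from position `i` to `i+1`
for `i ∈ S`, whose content is `d`. -/
noncomputable def funF (n : ℕ) (S : Set ℕ) : MvPowerSeries ℕ ℚ :=
  fun d => (Nat.card {g : Fin n → ℕ //
    (∀ i : ℕ, ∀ h : i + 1 < n,
      g ⟨i, Nat.lt_of_succ_lt h⟩ ≤ g ⟨i + 1, h⟩ ∧
      (i ∈ S → g ⟨i, Nat.lt_of_succ_lt h⟩ < g ⟨i + 1, h⟩)) ∧
    ∀ j : ℕ, d j = Nat.card {t : Fin n // g t = j}} : ℚ)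

/-- The chromatic symmetric function of the hypergraph with edge set `E` on the
finite vertex type `V`: the coefficient of a monomial `d` is the number of colorings
`χ : V → ℕ` with no edge monochromatic and content `d`. -/
noncomputable def chromSym {V : Type} [Fintype V] (E : Set (Set V)) :
    MvPowerSeries ℕ ℚ :=
  fun d => (Nat.card {χ : V → ℕ //
    (∀ e ∈ E, ¬ ∃ a, ∀ v ∈ e, χ v = a) ∧
    ∀ j : ℕ, d j = Nat.card {v : V // χ v = j}} : ℚ)

/-- The (0-indexed) descent set of a map `g : Fin n → Fin n`. -/
def desSetF (n : ℕ) (g : Fin n → Fin n) : Set ℕ :=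
  {i | ∃ h : i + 1 < n, g ⟨i + 1, h⟩ < g ⟨i, Nat.lt_of_succ_lt h⟩}

/-- `f ∈ A(π, S)` for a labeling `π : V ≃ Fin n`: `f` is weakly increasing along
`π⁻¹(0), …, π⁻¹(n-1)`, strictly from position `i` to `i+1` whenever `i ∈ S`. -/
def inAV {V : Type} (n : ℕ) (π : V ≃ Fin n) (S : Set ℕ) (f : V → ℕ) : Prop :=
  ∀ i : ℕ, ∀ h : i + 1 < n,
    f (π.symm ⟨i, Nat.lt_of_succ_lt h⟩) ≤ f (π.symm ⟨i + 1, h⟩) ∧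
    (i ∈ S → f (π.symm ⟨i, Nat.lt_of_succ_lt h⟩) < f (π.symm ⟨i + 1, h⟩))

/-! On a single edge, fix a labelling `σ` of its `m` vertices. Every coloring lies in `A(π, S)` for
exactly one labelling `π`, where `S` is the descent set of `σ ∘ π⁻¹`: this `π` lists the vertices by
color, breaking ties by `σ`. For a fixed `π`, the alternating sum of the indicators of `A(π, S)`
over all `S ⊆ [m - 1]` is the indicator of the constant colorings. Since every `S` is the descent
set of some permutation, this alternating sum can be subtracted from the average of the first
identity over `σ` without creating negative coefficients, which writes the indicator of the
nonconstant colorings as a nonnegative combination of indicators of sets `A(π, S)`, each of them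
the set of `(P, ω)`-partitions of a labelled chain on the edge.

In a hypergraph without cycles, labellings chosen independently on the edges are induced by one
labelling of all the vertices. Multiplying the identities of the edges therefore expresses the
chromatic symmetric function as a nonnegative combination of generating functions of
`(P, ω)`-partitions on `V`, and Stanley's fundamental lemma expands each of those into fundamental
quasisymmetric functions. -/

section FundamentalCone

/-- The cone of `F`-positive power series of degree `n`: the nonnegative rational combinations of
the fundamental quasisymmetric functions `F_S` with `S ⊆ {0, …, n - 2}`. -/
noncomputable def fundamentalCone (n : ℕ) : PointedCone ℚ (MvPowerSeries ℕ ℚ) :=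
  PointedCone.hull ℚ
    ((fun S : Finset ℕ => funF n ↑S) '' ((Finset.range (n - 1)).powerset : Set (Finset ℕ)))

theorem funF_mem_fundamentalCone {n : ℕ} {S : Finset ℕ} (hS : S ⊆ Finset.range (n - 1)) :
    funF n ↑S ∈ fundamentalCone n :=
  PointedCone.subset_hull (Set.mem_image_of_mem _ (Finset.mem_coe.mpr (Finset.mem_powerset.mpr hS)))

theorem exists_nonneg_of_mem_fundamentalCone {n : ℕ} {X : MvPowerSeries ℕ ℚ}
    (hX : X ∈ fundamentalCone n) :
    ∃ a : Finset ℕ → ℚ, (∀ S, 0 ≤ a S) ∧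
      X = ∑ S ∈ (Finset.range (n - 1)).powerset, a S • funF n ↑S := by
  obtain ⟨c, rfl⟩ := Submodule.mem_span_image_finset_iff_exists_fun' _ |>.mp hX
  exact ⟨fun S => c S, fun S => (c S).2, rfl⟩

end FundamentalCone

section ColoringSeries

theorem finite_setOf_content_eq {V : Type*} [Finite V] (d : ℕ →₀ ℕ) :
    {χ : V → ℕ | ∀ j : ℕ, d j = Nat.card {v : V // χ v = j}}.Finite := by
  refine (Set.Finite.pi' fun _ : V => d.support.finite_toSet).subset fun χ hχ v => ?_
  have : Nonempty {w : V // χ w = χ v} := ⟨⟨v, rfl⟩⟩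
  rw [Finset.mem_coe, Finsupp.mem_support_iff, hχ (χ v)]
  exact Nat.card_pos.ne'

variable {V : Type*} [Fintype V]

/-- The generating function `∑ w(χ) x^χ` of the colorings `χ : V → ℕ` weighted by `w`. -/
noncomputable def coloringSeries : ((V → ℕ) → ℚ) →ₗ[ℚ] MvPowerSeries ℕ ℚ where
  toFun w d := ∑ χ ∈ (finite_setOf_content_eq (V := V) d).toFinset, w χ
  map_add' _ _ := funext fun _ => Finset.sum_add_distrib
  map_smul' _ _ := funext fun _ => (Finset.mul_sum _ _ _).symm

theorem coloringSeries_boole_apply (P : (V → ℕ) → Prop) [DecidablePred P] (d : ℕ →₀ ℕ) :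
    coloringSeries (fun χ => if P χ then 1 else 0) d =
      Nat.card {χ : V → ℕ // P χ ∧ ∀ j : ℕ, d j = Nat.card {v : V // χ v = j}} := by
  change ∑ χ ∈ (finite_setOf_content_eq d).toFinset, _ = _
  rw [Finset.sum_boole, Nat.subtype_card]
  simp [and_comm]

open scoped Classical in
theorem coloringSeries_inAV {V : Type} [Fintype V] {n : ℕ} (π : V ≃ Fin n) (S : Set ℕ) :
    coloringSeries (fun χ => if inAV n π S χ then 1 else 0) = funF n S := by
  funext d
  rw [coloringSeries_boole_apply, funF]
  congr 1
  refine Nat.card_congr ((π.arrowCongr (Equiv.refl ℕ)).subtypeEquiv fun χ => ?_)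
  refine and_congr Iff.rfl (forall_congr' fun j => ?_)
  rw [Nat.card_congr (π.subtypeEquiv fun v => by simp :
    {v : V // χ v = j} ≃ {t : Fin n // π.arrowCongr (Equiv.refl ℕ) χ t = j})]

open scoped Classical in
theorem chromSym_eq_coloringSeries {V : Type} [Fintype V] (E : Set (Set V)) :
    chromSym E =
      coloringSeries fun χ => if ∀ e ∈ E, ¬ ∃ a, ∀ v ∈ e, χ v = a then 1 else 0 :=
  funext fun d => (coloringSeries_boole_apply _ d).symm

end ColoringSeries

section Standardization

theorem forall_lt_iff_forall_consecutive {α : Type*} (r : α → α → Prop) [IsTrans α r] {n : ℕ}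
    (f : Fin n → α) :
    (∀ i j, i < j → r (f i) (f j)) ↔
      ∀ i : ℕ, ∀ h : i + 1 < n, r (f ⟨i, Nat.lt_of_succ_lt h⟩) (f ⟨i + 1, h⟩) := by
  cases n with
  | zero => simp
  | succ n =>
    exact (Fin.liftFun_iff_succ r).trans
      ⟨fun H i h => H ⟨i, Nat.lt_of_succ_lt_succ h⟩, fun H i => H i (Nat.succ_lt_succ i.2)⟩

theorem existsUnique_strictMono_comp_symm {V α : Type*} [Fintype V] [LinearOrder α] {n : ℕ}
    (hn : Fintype.card V = n) {k : V → α} (hk : Function.Injective k) :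
    ∃! π : V ≃ Fin n, StrictMono (k ∘ π.symm) := by
  let _ : LinearOrder V := LinearOrder.lift' k hk
  let τ : Fin n ≃o V := Fintype.orderIsoFinOfCardEq V hn
  refine ⟨τ.symm.toEquiv, fun i j hij => τ.strictMono hij, fun π hπ => ?_⟩
  let ρ : Fin n ≃o V := StrictMono.orderIsoOfSurjective π.symm (fun i j hij => hπ hij)
    π.symm.surjective
  have hρ : ρ = τ := Subsingleton.elim ρ τ
  exact Equiv.symm_bijective.injective (Equiv.ext fun i => congrArg (· i) hρ)

/-- The key by which a coloring `χ` sorts the vertices: by color, ties being broken by `ω`. -/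
def lexKey {V α β : Type*} (ω : V → α) (χ : V → β) (v : V) : β ×ₗ α :=
  toLex (χ v, ω v)

theorem lexKey_lt_lexKey {V α β : Type*} [LT α] [LT β] {ω : V → α} {χ : V → β} {u v : V} :
    lexKey ω χ u < lexKey ω χ v ↔ χ u < χ v ∨ χ u = χ v ∧ ω u < ω v :=
  Prod.Lex.toLex_lt_toLex

theorem lexKey_injective {V α β : Type*} {ω : V → α} (hω : Function.Injective ω) (χ : V → β) :
    Function.Injective (lexKey ω χ) :=
  fun _ _ h => hω (congrArg (fun p => (ofLex p).2) h)

theorem exists_labelling_lt {V α : Type*} [Fintype V] [LinearOrder α] {n : ℕ}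
    (hn : Fintype.card V = n) (k : V → α) :
    ∃ σ : V ≃ Fin n, ∀ u v, k u < k v → σ u < σ v := by
  obtain ⟨σ, hσ, -⟩ := existsUnique_strictMono_comp_symm hn
    (lexKey_injective (Fintype.equivFinOfCardEq hn).injective k)
  refine ⟨σ, fun u v huv => hσ.lt_iff_lt.mp ?_⟩
  simpa using lexKey_lt_lexKey.mpr (Or.inl huv)

theorem desSetF_subset_range {n : ℕ} (g : Fin n → Fin n) :
    desSetF n g ⊆ ↑(Finset.range (n - 1)) := by
  rintro i ⟨h, -⟩
  exact Finset.mem_range.mpr (by omega)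

/-- The descent set `desSetF n g` as a finset. -/
noncomputable def descents {n : ℕ} (g : Fin n → Fin n) : Finset ℕ :=
  ((Finset.finite_toSet _).subset (desSetF_subset_range g)).toFinset

theorem mem_descents {n : ℕ} {g : Fin n → Fin n} {i : ℕ} :
    i ∈ descents g ↔ ∃ h : i + 1 < n, g ⟨i + 1, h⟩ < g ⟨i, Nat.lt_of_succ_lt h⟩ :=
  Set.Finite.mem_toFinset _

theorem descents_subset_range {n : ℕ} (g : Fin n → Fin n) :
    descents g ⊆ Finset.range (n - 1) :=
  fun _ hi => desSetF_subset_range g ((Set.Finite.mem_toFinset _).mp hi)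

theorem inAV_descents_iff {V : Type} {n : ℕ} (σ π : V ≃ Fin n) (χ : V → ℕ) :
    inAV n π ↑(descents (σ ∘ π.symm)) χ ↔ StrictMono (lexKey σ χ ∘ π.symm) := by
  refine Iff.trans ?_ (forall_lt_iff_forall_consecutive (· < ·) (lexKey σ χ ∘ π.symm)).symm
  refine forall₂_congr fun i h => ?_
  have hne : σ (π.symm ⟨i, Nat.lt_of_succ_lt h⟩) ≠ σ (π.symm ⟨i + 1, h⟩) := by simp
  simp only [Finset.mem_coe, mem_descents, h, exists_true_left, Function.comp_apply,
    lexKey_lt_lexKey]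
  grind

/-- Stanley's `(P, ω)`-partitions: `r u v` forces `χ u ≤ χ v`, with strict inequality unless
`ω u < ω v`. The relation `r` plays the role of the order of `P` and may be arbitrary. -/
def IsPOmegaPartition {V α β : Type*} [LT α] [LT β] (r : V → V → Prop) (ω : V → α) (χ : V → β) :
    Prop :=
  ∀ u v, r u v → lexKey ω χ u < lexKey ω χ v

theorem isPOmegaPartition_chain_iff {V : Type} {n : ℕ} (σ π : V ≃ Fin n) (χ : V → ℕ) :
    IsPOmegaPartition (fun u v => π u < π v) σ χ ↔ inAV n π ↑(descents (σ ∘ π.symm)) χ := by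
  rw [inAV_descents_iff]
  simp only [IsPOmegaPartition, π.symm.surjective.forall₂, Equiv.apply_symm_apply]
  rfl

open scoped Classical in
theorem boole_isPOmegaPartition_eq_sum_boole_inAV {V : Type} [Fintype V] [DecidableEq V] {n : ℕ}
    (r : V → V → Prop) (σ : V ≃ Fin n) (χ : V → ℕ) :
    (if IsPOmegaPartition r σ χ then 1 else 0 : ℚ) =
      ∑ π : V ≃ Fin n with ∀ u v, r u v → π u < π v,
        if inAV n π ↑(descents (σ ∘ π.symm)) χ then 1 else 0 := by
  obtain ⟨π₀, hπ₀, hunique⟩ := existsUnique_strictMono_comp_symm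
    ((Fintype.card_congr σ).trans (Fintype.card_fin n)) (lexKey_injective σ.injective χ)
  have hlt (u v : V) : lexKey σ χ u < lexKey σ χ v ↔ π₀ u < π₀ v := by
    simpa using hπ₀.lt_iff_lt (a := π₀ u) (b := π₀ v)
  have hiff (π : V ≃ Fin n) : inAV n π ↑(descents (σ ∘ π.symm)) χ ↔ π = π₀ :=
    (inAV_descents_iff σ π χ).trans ⟨hunique π, fun h => h ▸ hπ₀⟩
  simp only [hiff, Finset.sum_ite_eq', Finset.mem_filter_univ, IsPOmegaPartition, hlt]

open scoped Classical in
theorem coloringSeries_isPOmegaPartition_mem {V : Type} [Fintype V] {n : ℕ} (r : V → V → Prop)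
    (σ : V ≃ Fin n) :
    coloringSeries (fun χ => if IsPOmegaPartition r σ χ then 1 else 0) ∈ fundamentalCone n := by
  have hsum : (fun χ : V → ℕ => if IsPOmegaPartition r σ χ then (1 : ℚ) else 0) =
      ∑ π : V ≃ Fin n with ∀ u v, r u v → π u < π v,
        fun χ => if inAV n π ↑(descents (σ ∘ π.symm)) χ then 1 else 0 := by
    funext χ
    rw [boole_isPOmegaPartition_eq_sum_boole_inAV, Finset.sum_apply]
  rw [hsum, map_sum]
  refine sum_mem fun π _ => ?_
  rw [coloringSeries_inAV]
  exact funF_mem_fundamentalCone (descents_subset_range _)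

end Standardization

section SingleEdge

variable {m : ℕ}

/-- A function on `ℕ` stepping down exactly at the positions in `S`; sorting by it produces a
permutation with descent set `S`. -/
def descentHeight (S : Finset ℕ) (j : ℕ) : ℤ :=
  ∑ i ∈ Finset.range j, if i ∈ S then -1 else 1

theorem descentHeight_succ_lt_iff {S : Finset ℕ} {j : ℕ} :
    descentHeight S (j + 1) < descentHeight S j ↔ j ∈ S := by
  rw [descentHeight, Finset.sum_range_succ, ← descentHeight]
  split_ifs with hj <;> simp [hj]

theorem lt_descentHeight_succ_iff {S : Finset ℕ} {j : ℕ} :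
    descentHeight S j < descentHeight S (j + 1) ↔ j ∉ S := by
  rw [descentHeight, descentHeight, Finset.sum_range_succ]
  split_ifs with hj <;> simp [hj]

theorem exists_perm_descents_eq {S : Finset ℕ} (hS : S ⊆ Finset.range (m - 1)) :
    ∃ τ : Equiv.Perm (Fin m), descents τ = S := by
  obtain ⟨τ, hτ⟩ := exists_labelling_lt (Fintype.card_fin m) fun i => descentHeight S i
  refine ⟨τ, Finset.ext fun i => mem_descents.trans ⟨?_, fun hi => ?_⟩⟩
  · rintro ⟨h, hlt⟩
    by_contra hi
    exact hlt.asymm (hτ _ _ (lt_descentHeight_succ_iff.mpr hi))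
  · have h : i + 1 < m := by
      have := Finset.mem_range.mp (hS hi)
      omega
    exact ⟨h, hτ _ _ (descentHeight_succ_lt_iff.mpr hi)⟩

theorem exists_forall_eq_iff_forall_consecutive {U β : Type*} [Nonempty β] (π : U ≃ Fin m)
    (χ : U → β) :
    (∃ a, ∀ x, χ x = a) ↔ ∀ i : ℕ, ∀ h : i + 1 < m,
      χ (π.symm ⟨i, Nat.lt_of_succ_lt h⟩) = χ (π.symm ⟨i + 1, h⟩) := by
  refine Iff.trans ?_ (forall_lt_iff_forall_consecutive (· = ·) (χ ∘ π.symm))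
  constructor
  · rintro ⟨a, ha⟩ i j -
    simp only [Function.comp_apply, ha]
  · intro H
    have hconst (x y : U) : χ x = χ y := by
      rcases lt_trichotomy (π x) (π y) with h | h | h
      · simpa using H _ _ h
      · rw [π.injective h]
      · simpa using (H _ _ h).symm
    rcases isEmpty_or_nonempty U with _ | ⟨⟨y⟩⟩
    · exact ⟨Classical.arbitrary β, isEmptyElim⟩
    · exact ⟨χ y, fun x => hconst x y⟩

variable {U : Type}

open scoped Classical in
theorem boole_inAV_eq_prod (π : U ≃ Fin m) (S : Finset ℕ) (χ : U → ℕ) :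
    (if inAV m π ↑S χ then 1 else 0 : ℚ) =
      (∏ i ∈ Finset.range (m - 1) \ S, if ∀ h : i + 1 < m,
          χ (π.symm ⟨i, Nat.lt_of_succ_lt h⟩) ≤ χ (π.symm ⟨i + 1, h⟩) then 1 else 0) *
        ∏ i ∈ S, if ∀ h : i + 1 < m,
          χ (π.symm ⟨i, Nat.lt_of_succ_lt h⟩) < χ (π.symm ⟨i + 1, h⟩) then 1 else 0 := by
  rw [Finset.prod_boole, Finset.prod_boole, ite_zero_mul_ite_zero, one_mul]
  refine if_congr ⟨fun H => ⟨fun i _ h => (H i h).1, fun i hi h => (H i h).2 hi⟩, ?_⟩ rfl rfl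
  rintro ⟨hle, hlt⟩ i h
  by_cases hi : i ∈ S
  · exact ⟨(hlt i hi h).le, fun _ => hlt i hi h⟩
  · exact ⟨hle i (by simp [hi]; omega) h, fun hi' => absurd hi' hi⟩

open scoped Classical in
theorem sum_neg_one_pow_card_mul_boole_inAV (π : U ≃ Fin m) (χ : U → ℕ) :
    ∑ S ∈ (Finset.range (m - 1)).powerset, (-1 : ℚ) ^ S.card * (if inAV m π ↑S χ then 1 else 0) =
      if ∃ a, ∀ x, χ x = a then 1 else 0 := by
  set le : ℕ → Prop := fun i => ∀ h : i + 1 < m,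
    χ (π.symm ⟨i, Nat.lt_of_succ_lt h⟩) ≤ χ (π.symm ⟨i + 1, h⟩)
  set lt : ℕ → Prop := fun i => ∀ h : i + 1 < m,
    χ (π.symm ⟨i, Nat.lt_of_succ_lt h⟩) < χ (π.symm ⟨i + 1, h⟩)
  calc
    _ = ∑ S ∈ (Finset.range (m - 1)).powerset, (-1 : ℚ) ^ S.card *
          (∏ i ∈ Finset.range (m - 1) \ S, if le i then 1 else 0) *
            ∏ i ∈ S, if lt i then 1 else 0 :=
      Finset.sum_congr rfl fun S _ => by rw [boole_inAV_eq_prod, mul_assoc]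
    _ = ∏ i ∈ Finset.range (m - 1), ((if le i then 1 else 0) - if lt i then 1 else 0) :=
      (Finset.prod_sub _ _ _).symm
    _ = ∏ i ∈ Finset.range (m - 1), if ∀ h : i + 1 < m,
          χ (π.symm ⟨i, Nat.lt_of_succ_lt h⟩) = χ (π.symm ⟨i + 1, h⟩) then 1 else 0 :=
      Finset.prod_congr rfl fun i hi => by
        have h : i + 1 < m := by
          have := Finset.mem_range.mp hi
          omega
        simp only [le, lt, h, forall_true_left]
        grind
    _ = _ := by
      rw [Finset.prod_boole, exists_forall_eq_iff_forall_consecutive π]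
      refine if_congr ⟨fun H i h => H i (Finset.mem_range.mpr (by omega)) h, fun H i _ => H i⟩
        rfl rfl

variable [Fintype U] [DecidableEq U]

theorem image_descents_comp_symm (π : U ≃ Fin m) :
    Finset.univ.image (fun σ : U ≃ Fin m => descents (σ ∘ π.symm)) =
      (Finset.range (m - 1)).powerset := by
  ext S
  simp only [Finset.mem_image, Finset.mem_univ, true_and, Finset.mem_powerset]
  constructor
  · rintro ⟨σ, rfl⟩
    exact descents_subset_range _
  · intro hS
    obtain ⟨τ, rfl⟩ := exists_perm_descents_eq hS
    exact ⟨π.trans τ, congrArg descents (funext fun i => by simp)⟩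

/-- The number of labellings whose descent set relative to `π` is `S`. -/
noncomputable def descentCount (π : U ≃ Fin m) (S : Finset ℕ) : ℕ :=
  (Finset.univ.filter fun σ : U ≃ Fin m => descents (σ ∘ π.symm) = S).card

theorem descentCount_pos (π σ : U ≃ Fin m) : 0 < descentCount π (descents (σ ∘ π.symm)) :=
  Finset.card_pos.mpr ⟨σ, by simp⟩

open scoped Classical in
theorem sum_sign_div_descentCount_mul_boole_inAV (π : U ≃ Fin m) (χ : U → ℕ) :
    ∑ σ : U ≃ Fin m, (-1 : ℚ) ^ (descents (σ ∘ π.symm)).card /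
        descentCount π (descents (σ ∘ π.symm)) *
          (if inAV m π ↑(descents (σ ∘ π.symm)) χ then 1 else 0) =
      if ∃ a, ∀ x, χ x = a then 1 else 0 := by
  rw [← sum_neg_one_pow_card_mul_boole_inAV π χ, ← image_descents_comp_symm π,
    Finset.sum_comp (fun S : Finset ℕ => (-1 : ℚ) ^ S.card / descentCount π S *
      (if inAV m π ↑S χ then 1 else 0)) fun σ : U ≃ Fin m => descents (σ ∘ π.symm)]
  refine Finset.sum_congr rfl fun S hS => ?_
  obtain ⟨σ, -, rfl⟩ := Finset.mem_image.mp hS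
  have hpos := descentCount_pos π σ
  change descentCount π (descents (σ ∘ π.symm)) • _ = _
  rw [nsmul_eq_mul]
  field_simp

open scoped Classical in
theorem sum_boole_inAV_descents (σ : U ≃ Fin m) (χ : U → ℕ) :
    ∑ π : U ≃ Fin m, (if inAV m π ↑(descents (σ ∘ π.symm)) χ then 1 else 0 : ℚ) = 1 := by
  have h := boole_isPOmegaPartition_eq_sum_boole_inAV (fun _ _ => False) σ χ
  simpa only [IsPOmegaPartition, false_imp_iff, implies_true, if_true, Finset.filter_true]
    using h.symm

/-- The weight of the chain `A(π, S)`, with `S` the descent set of `σ ∘ π⁻¹`, in the fractional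
partition of the nonconstant colorings of an edge. -/
noncomputable def chainWeight (π σ : U ≃ Fin m) : ℚ :=
  (1 - (-1) ^ (descents (σ ∘ π.symm)).card / descentCount π (descents (σ ∘ π.symm))) /
    Fintype.card (U ≃ Fin m)

theorem chainWeight_nonneg (π σ : U ≃ Fin m) : 0 ≤ chainWeight π σ := by
  have hpos : (1 : ℚ) ≤ descentCount π (descents (σ ∘ π.symm)) := by
    exact_mod_cast descentCount_pos π σ
  refine div_nonneg (sub_nonneg.mpr ((div_le_one (by linarith)).mpr (le_trans ?_ hpos)))
    (Nat.cast_nonneg _)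
  exact (le_abs_self _).trans (abs_neg_one_pow _).le

open scoped Classical in
theorem boole_nonconstant_eq_sum_chainWeight (hm : Fintype.card U = m) (χ : U → ℕ) :
    (if ¬ ∃ a, ∀ x, χ x = a then 1 else 0 : ℚ) =
      ∑ π : U ≃ Fin m, ∑ σ : U ≃ Fin m, chainWeight π σ *
        if IsPOmegaPartition (fun x y => π x < π y) σ χ then 1 else 0 := by
  set N : ℚ := (Fintype.card (U ≃ Fin m) : ℚ) with hN
  have hN₀ : N ≠ 0 :=
    Nat.cast_ne_zero.mpr (Fintype.card_pos_iff.mpr ⟨Fintype.equivFinOfCardEq hm⟩).ne'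
  have hall : ∑ π : U ≃ Fin m, ∑ σ : U ≃ Fin m,
      (if inAV m π ↑(descents (σ ∘ π.symm)) χ then 1 else 0 : ℚ) = N := by
    rw [Finset.sum_comm]
    simp only [sum_boole_inAV_descents, Finset.sum_const, Finset.card_univ, nsmul_eq_mul, mul_one,
      hN]
  have hconst : ∑ π : U ≃ Fin m, ∑ σ : U ≃ Fin m, (-1 : ℚ) ^ (descents (σ ∘ π.symm)).card /
      descentCount π (descents (σ ∘ π.symm)) *
        (if inAV m π ↑(descents (σ ∘ π.symm)) χ then 1 else 0) =
      N * if ∃ a, ∀ x, χ x = a then 1 else 0 := by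
    simp only [sum_sign_div_descentCount_mul_boole_inAV, Finset.sum_const, Finset.card_univ,
      nsmul_eq_mul, hN]
  simp only [isPOmegaPartition_chain_iff, chainWeight, div_mul_eq_mul_div, sub_mul, one_mul,
    ← Finset.sum_div, Finset.sum_sub_distrib]
  simp only [div_mul_eq_mul_div] at hconst
  rw [hall, hconst, eq_div_iff hN₀]
  split_ifs <;> ring

end SingleEdge

section TwoSection

theorem dist_getVert_of_length_eq_dist {V : Type*} {G : SimpleGraph V} {u v : V}
    {p : G.Walk u v} (hp : p.length = G.dist u v) {i j : ℕ} (hij : i ≤ j) (hj : j ≤ p.length) :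
    G.dist (p.getVert i) (p.getVert j) = j - i := by
  have h := SimpleGraph.length_eq_dist_of_subwalk hp
    (((p.take j).isSubwalk_drop i).trans (p.isSubwalk_take j))
  rwa [SimpleGraph.Walk.drop_length, SimpleGraph.Walk.take_length,
    SimpleGraph.Walk.take_getVert, min_eq_left hj, min_eq_right hij, eq_comm] at h

variable {V : Type} {E : Set (Set V)} {e : Set V} {u v : V}

/-- The 2-section of a hypergraph: two vertices are adjacent when they lie on a common edge. Its
connected components are those of the hypergraph. -/
def twoSection (E : Set (Set V)) : SimpleGraph V where
  Adj u v := u ≠ v ∧ ∃ e ∈ E, u ∈ e ∧ v ∈ e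
  symm := ⟨fun _ _ ⟨hne, e, he, hu, hv⟩ => ⟨hne.symm, e, he, hv, hu⟩⟩
  loopless := ⟨fun _ h => h.1 rfl⟩

theorem eq_or_twoSection_adj (he : e ∈ E) (hu : u ∈ e) (hv : v ∈ e) :
    u = v ∨ (twoSection E).Adj u v :=
  or_iff_not_imp_left.mpr fun hne => ⟨hne, e, he, hu, hv⟩

theorem twoSection_reachable (he : e ∈ E) (hu : u ∈ e) (hv : v ∈ e) :
    (twoSection E).Reachable u v := by
  rcases eq_or_twoSection_adj he hu hv with rfl | h
  exacts [.refl _, h.reachable]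

theorem twoSection_dist_le_one (he : e ∈ E) (hu : u ∈ e) (hv : v ∈ e) :
    (twoSection E).dist u v ≤ 1 := by
  rcases eq_or_twoSection_adj he hu hv with rfl | h
  · simp
  · exact (SimpleGraph.dist_eq_one_iff_adj.mpr h).le

theorem eq_or_eq_ends_of_snoc_zero_eq {α : Type*} {n : ℕ} {x : Fin (n + 1) → α}
    (hx : Function.Injective x) (i j : Fin (n + 2))
    (h : Fin.snoc (α := fun _ => α) x (x 0) i = Fin.snoc (α := fun _ => α) x (x 0) j) :
    i = j ∨ (i = 0 ∧ j = Fin.last (n + 1)) ∨ (j = 0 ∧ i = Fin.last (n + 1)) := by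
  induction i using Fin.lastCases <;> induction j using Fin.lastCases <;>
    simp_all [hx.eq_iff]

namespace HPath

/-- The path read off a shortest walk of the 2-section: two steps inside the same edge could be
shortened, so the edges are distinct. -/
theorem exists_of_twoSection_reachable (h : (twoSection E).Reachable u v) :
    ∃ p : HPath E, p.first = u ∧ p.last = v ∧ Function.Injective p.vert := by
  obtain ⟨w, hw⟩ := h.exists_walk_length_eq_dist
  have hdist {i j : ℕ} := dist_getVert_of_length_eq_dist hw (i := i) (j := j)
  choose edge edge_mem mem_left mem_right using
    fun i : Fin w.length => (w.adj_getVert_succ i.2).2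
  have hvert : Function.Injective fun i : Fin (w.length + 1) => w.getVert i := by
    refine Function.Injective.of_lt_imp_ne fun i j hij heq => ?_
    have h := hdist hij.le (Nat.le_of_lt_succ j.2)
    rw [show w.getVert i = w.getVert j from heq, SimpleGraph.dist_self] at h
    omega
  have hedge : Function.Injective edge := by
    refine Function.Injective.of_lt_imp_ne fun i j hij heq => ?_
    have h := hdist (i := i) (j := j + 1) (by omega) j.2
    have hle := twoSection_dist_le_one (edge_mem i) (mem_left i) (heq ▸ mem_right j)
    omega
  exact ⟨{ m := w.length
           vert := fun i => w.getVert i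
           edge := edge
           edge_mem := edge_mem
           edge_inj := hedge
           vert_almost_inj := fun _ _ hij => Or.inl (hvert hij)
           mem_left := mem_left
           mem_right := mem_right }, w.getVert_zero, w.getVert_length, hvert⟩

theorem exists_isCycle_insert (p : HPath E) (hp : Function.Injective p.vert)
    (hne : p.first ≠ p.last) (he : e ∉ E) (hfirst : p.first ∈ e) (hlast : p.last ∈ e) :
    ∃ c : HPath (insert e E), c.IsCycle := by
  have hm : p.m ≠ 0 := fun h => hne (congrArg p.vert (Fin.ext h.symm))
  refine ⟨{ m := p.m + 1
            vert := Fin.snoc (α := fun _ => V) p.vert p.first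
            edge := Fin.snoc (α := fun _ => Set V) p.edge e
            edge_mem := Fin.lastCases ?_ fun i => ?_
            edge_inj := Fin.snoc_injective_of_injective p.edge_inj
              fun ⟨i, hi⟩ => he (hi ▸ p.edge_mem i)
            vert_almost_inj := eq_or_eq_ends_of_snoc_zero_eq hp
            mem_left := Fin.lastCases ?_ fun i => ?_
            mem_right := Fin.lastCases ?_ fun i => ?_ }, ?_, by lia⟩
  · simp
  · simpa using Or.inr (p.edge_mem i)
  · simpa [last] using hlast
  · simpa using p.mem_left i
  · simpa using hfirst
  · simpa [← Fin.castSucc_succ] using p.mem_right i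
  · simp [first, last]

/-- A path, viewed in a hypergraph with more edges. -/
def incl {E' : Set (Set V)} (h : E ⊆ E') (p : HPath E) : HPath E' :=
  { p with edge_mem := fun i => h (p.edge_mem i) }

end HPath

theorem connectedComponentMk_twoSection_injOn (he : e ∉ E)
    (hacyclic : ∀ p : HPath (insert e E), ¬ p.IsCycle) :
    Set.InjOn (twoSection E).connectedComponentMk e := by
  intro u hu v hv huv
  obtain ⟨p, rfl, rfl, hp⟩ :=
    HPath.exists_of_twoSection_reachable (SimpleGraph.ConnectedComponent.exact huv)
  by_contra hne
  obtain ⟨c, hc⟩ := p.exists_isCycle_insert hp hne he hu hv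
  exact hacyclic c hc

end TwoSection

section Gluing

variable {V : Type} {E : Set (Set V)}

/-- The new edge meets each component of the other edges at most once, so its potential can be
matched by a shift that is constant on these components. -/
theorem exists_sub_eq_sub {A : Type*} [AddCommGroup A] (hfin : E.Finite)
    (hacyclic : ∀ p : HPath E, ¬ p.IsCycle) (f : ∀ e : E, ↥(e : Set V) → A) :
    ∃ ω : V → A, ∀ (e : E) (x y : (e : Set V)), ω x - ω y = f e x - f e y := by
  induction E, hfin using Set.Finite.induction_on with
  | empty => exact ⟨0, isEmptyElim⟩
  | @insert e₀ E he₀ _ ih =>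
    obtain ⟨ω, hω⟩ := ih (fun p => hacyclic (p.incl (Set.subset_insert _ _)))
      fun e => f ⟨e, Or.inr e.2⟩
    have hinj := (connectedComponentMk_twoSection_injOn he₀ hacyclic).injective
    let shift : (twoSection E).ConnectedComponent → A :=
      Function.extend (e₀.domRestrict (twoSection E).connectedComponentMk)
        (fun x => f ⟨e₀, Or.inl rfl⟩ x - ω x) 0
    have hshift (x : e₀) : shift ((twoSection E).connectedComponentMk x) =
        f ⟨e₀, Or.inl rfl⟩ x - ω x :=
      hinj.extend_apply _ _ x
    refine ⟨fun v => ω v + shift ((twoSection E).connectedComponentMk v), ?_⟩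
    rintro ⟨e, rfl | he⟩ x y
    · simp only [hshift]
      abel
    · have hxy : (twoSection E).connectedComponentMk (x : V) =
          (twoSection E).connectedComponentMk (y : V) :=
        SimpleGraph.ConnectedComponent.sound (twoSection_reachable he x.2 y.2)
      simp only [hxy, add_sub_add_right_eq_sub]
      exact hω ⟨e, he⟩ x y

variable [Fintype V]

theorem exists_labelling_lt_iff {A : Type*} [AddCommGroup A] [LinearOrder A]
    [IsOrderedAddMonoid A] (hacyclic : ∀ p : HPath E, ¬ p.IsCycle) {f : ∀ e : E, ↥(e : Set V) → A}
    (hf : ∀ e, Function.Injective (f e)) :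
    ∃ ω : V ≃ Fin (Fintype.card V), ∀ (e : E) (x y : (e : Set V)),
      ω x < ω y ↔ f e x < f e y := by
  obtain ⟨g, hg⟩ := exists_sub_eq_sub E.toFinite hacyclic f
  obtain ⟨ω, hω⟩ := exists_labelling_lt rfl g
  have hlt (e : E) (x y : (e : Set V)) (h : f e x < f e y) : ω x < ω y :=
    hω _ _ (sub_neg.mp (hg e x y ▸ sub_neg.mpr h))
  refine ⟨ω, fun e x y => ⟨fun h => ?_, hlt e x y⟩⟩
  rcases lt_trichotomy (f e x) (f e y) with h' | h' | h'
  · exact h'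
  · exact absurd h (hf e h' ▸ lt_irrefl _)
  · exact absurd h (hlt e y x h').not_gt

theorem exists_isPOmegaPartition_iff_forall_edge (hacyclic : ∀ p : HPath E, ¬ p.IsCycle)
    {m : E → ℕ} (r : ∀ e : E, ↥(e : Set V) → ↥(e : Set V) → Prop)
    (σ : ∀ e : E, ↥(e : Set V) ≃ Fin (m e)) :
    ∃ (R : V → V → Prop) (ω : V ≃ Fin (Fintype.card V)), ∀ χ : V → ℕ,
      IsPOmegaPartition R ω χ ↔
        ∀ e : E, IsPOmegaPartition (r e) (σ e) ((e : Set V).domRestrict χ) := by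
  obtain ⟨ω, hω⟩ := exists_labelling_lt_iff hacyclic (f := fun e x => ((σ e x : ℕ) : ℤ))
    fun e => Nat.cast_injective.comp (Fin.val_injective.comp (σ e).injective)
  have hkey (χ : V → ℕ) (e : E) (x y : (e : Set V)) :
      lexKey ω χ x < lexKey ω χ y ↔
        lexKey (σ e) ((e : Set V).domRestrict χ) x <
          lexKey (σ e) ((e : Set V).domRestrict χ) y := by
    simp only [lexKey_lt_lexKey, hω, Nat.cast_lt, Fin.val_fin_lt, Set.domRestrict_apply]
  refine ⟨fun u v => ∃ (e : E) (x y : (e : Set V)), r e x y ∧ ↑x = u ∧ ↑y = v, ω, fun χ => ?_⟩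
  constructor
  · exact fun H e x y hxy => (hkey χ e x y).mp (H x y ⟨e, x, y, hxy, rfl, rfl⟩)
  · rintro H _ _ ⟨e, x, y, hxy, rfl, rfl⟩
    exact (hkey χ e x y).mpr (H e x y hxy)

end Gluing

open scoped Classical in
theorem chromSym_eq_sum_prod_chainWeight {V : Type} [Fintype V] (E : Set (Set V)) :
    chromSym E =
      ∑ q : ∀ e : E,
          (↥(e : Set V) ≃ Fin (Fintype.card e)) × (↥(e : Set V) ≃ Fin (Fintype.card e)),
        (∏ e, chainWeight (q e).1 (q e).2) • coloringSeries fun χ : V → ℕ =>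
          if ∀ e, IsPOmegaPartition (fun x y => (q e).1 x < (q e).1 y) (q e).2
            ((e : Set V).domRestrict χ) then 1 else 0 := by
  rw [chromSym_eq_coloringSeries]
  simp only [← map_smul, ← map_sum]
  congr 1
  funext χ
  calc
    _ = ∏ e : E, if ¬ ∃ a, ∀ x, (e : Set V).domRestrict χ x = a then (1 : ℚ) else 0 := by
      simp only [Fintype.prod_boole, Subtype.forall, Set.domRestrict_apply]
    _ = ∏ e : E, ∑ q :
          (↥(e : Set V) ≃ Fin (Fintype.card e)) × (↥(e : Set V) ≃ Fin (Fintype.card e)),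
          chainWeight q.1 q.2 *
            if IsPOmegaPartition (fun x y => q.1 x < q.1 y) q.2 ((e : Set V).domRestrict χ)
              then 1 else 0 := by
      simp only [boole_nonconstant_eq_sum_chainWeight rfl, Fintype.sum_prod_type]
    _ = _ := by
      rw [Fintype.prod_sum, Finset.sum_apply]
      simp only [Finset.prod_mul_distrib, Fintype.prod_boole, Pi.smul_apply, smul_eq_mul]

theorem chromSym_mem_fundamentalCone {V : Type} [Fintype V] {E : Set (Set V)}
    (hacyclic : ∀ p : HPath E, ¬ p.IsCycle) :
    chromSym E ∈ fundamentalCone (Fintype.card V) := by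
  classical
  rw [chromSym_eq_sum_prod_chainWeight]
  refine sum_mem fun q _ => PointedCone.smul_mem _
    (Finset.prod_nonneg fun e _ => chainWeight_nonneg (q e).1 (q e).2) ?_
  obtain ⟨R, ω, hR⟩ := exists_isPOmegaPartition_iff_forall_edge hacyclic
    (fun e x y => (q e).1 x < (q e).1 y) fun e => (q e).2
  simp only [← hR]
  exact coloringSeries_isPOmegaPartition_mem R ω

theorem hypertree_partition_F_positive_general {V : Type} [Fintype V] {E : Set (Set V)}
    (hacyclic : ∀ p : HPath E, ¬ p.IsCycle) :
    ∃ a : Finset ℕ → ℚ, (∀ S, 0 ≤ a S) ∧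
      chromSym E =
        ∑ S ∈ (Finset.range (Fintype.card V - 1)).powerset, a S • funF (Fintype.card V) ↑S :=
  exists_nonneg_of_mem_fundamentalCone (chromSym_mem_fundamentalCone hacyclic)

/-- Suppose `H` is a hypertree such that for each edge `e` there is
a family of subsets `S π ⊆ {0, …, |e|-2}` indexed by bijections `π : e ≃ Fin |e|`
for which the nonconstant colorings of `e` are the disjoint union of the sets
`A(π, S π)`. Then `X_H` is `F`-positive. -/
theorem hypertree_partition_F_positive {V : Type} [Fintype V] (E : Set (Set V))
    (hT : IsHypertreeOn Set.univ E) (n : ℕ) (hn : Fintype.card V = n)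
    (hpart : ∀ e ∈ E, ∃ S : (↥e ≃ Fin (Nat.card ↥e)) → Set ℕ,
      ∀ χ : ↥e → ℕ, (¬ ∃ a, ∀ x, χ x = a) ↔
        ∃! π : ↥e ≃ Fin (Nat.card ↥e), inAV (Nat.card ↥e) π (S π) χ) :
    ∃ a : Finset ℕ → ℚ, (∀ S, 0 ≤ a S) ∧
      chromSym E = ∑ S ∈ (Finset.range (n - 1)).powerset, a S • funF n ↑S := by
  subst hn
  exact hypertree_partition_F_positive_general hT.2.2
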